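/- Let G_{n,d} be the configuration-model random d-regular multigraph on n vertices. Suppose d ≥ 12 and 3.5 < k ≤ (1 − 1/√2) d, and set C_{k,d} = e^{−4} (2k/d)^{1 + 1/(k−1)}. Then with high probability as n → ∞, every vertex subset of G_{n,d} of size at most C_{k,d} · n induces a k-sparse subgraph; moreover the probability that this property fails is O_{k,d}(n^{3.5 − k}). -/

import Mathlib

/-!
The configuration model; `k`-sparseness of induced sub-multigraphs.
-/

open scoped Classical

noncomputable section

/-- The set of pairings (perfect matchings of the `n*d` half-edges) in the configuration
model for a `d`-regular multigraph on `n` vertices. -/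
def pairings (n d : ℕ) : Finset ((Fin n × Fin d) ≃ (Fin n × Fin d)) :=
  Finset.univ.filter fun M => (∀ x, M (M x) = x) ∧ ∀ x, M x ≠ x

/-- The probability, under the uniform distribution on pairings of the configuration model,
of the event `P`. -/
def configProb (n d : ℕ) (P : ((Fin n × Fin d) ≃ (Fin n × Fin d)) → Prop) : ℝ :=
  (((pairings n d).filter P).card : ℝ) / ((pairings n d).card : ℝ)

/-- The number of edges (loops and parallel edges counted) of the sub-multigraph induced on
`S` by the configuration-model multigraph of the pairing `M`: half the number of half-edges
whose own vertex and whose partner's vertex both lie in `S`. -/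
def edgesWithin {n d : ℕ} (M : (Fin n × Fin d) ≃ (Fin n × Fin d)) (S : Finset (Fin n)) : ℕ :=
  (Finset.univ.filter fun h : Fin n × Fin d => h.1 ∈ S ∧ (M h).1 ∈ S).card / 2

/-!
First moment over vertex sets. If `m` disjoint pairs of half-edges are prescribed, re-pairing them
one at a time shows that a uniform pairing contains all of them with probability at most
`(n d - 2 m)⁻ᵐ`. Inside a set `S` of `s` vertices there are at most `C(s d, m) (s d)ᵐ` ways to
prescribe them, so for `s ≤ (1 - 2 / e) n` the set `S` spans `m` edges with probability at most
`(e² s² d / (2 m n))ᵐ`. With `m ≥ k s` and `C(n, s) ≤ (e n / s)ˢ` the expected number of bad sets of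
size `s ≤ c n`, where `c = C_{k,d}`, is at most `(e^(5 - 2k) (s / (c n))^(k - 1))ˢ`. Since
`k > 5 / 2`, the first factor gives a convergent series in `s`, and a single power of the second one
supplies the decay `n^(1 - k)`. When `d < 2 k` every vertex set is `k`-sparse.
-/

section PerfectMatching

open Finset

variable {α : Type*} [Fintype α]

/-- The perfect matchings of a finite type, encoded as the fixed-point-free involutions `M`, where
`M x` is the partner of `x`. For half-edges these are the `pairings` of the configuration model. -/
def perfectMatchings (α : Type*) [Fintype α] : Finset (Equiv.Perm α) :=
  {M | Function.Involutive M ∧ ∀ x, M x ≠ x}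

lemma mem_perfectMatchings {M : Equiv.Perm α} :
    M ∈ perfectMatchings α ↔ Function.Involutive M ∧ ∀ x, M x ≠ x := by
  simp [perfectMatchings]

lemma perfectMatchings_nonempty (h : Even (Fintype.card α)) : (perfectMatchings α).Nonempty := by
  obtain ⟨r, hr⟩ := h
  have e : α ≃ Fin r × Bool := Fintype.equivOfCardEq (by simp [hr, mul_two])
  refine ⟨e.symm.permCongr (.prodCongr (.refl _) .boolNot), mem_perfectMatchings.2 ⟨?_, ?_⟩⟩
  · intro x
    simp [Equiv.permCongr_apply, Prod.map]
  · intro x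
    simp [Equiv.permCongr_apply, Equiv.symm_apply_eq, Prod.ext_iff]

lemma conj_mem_perfectMatchings (σ : Equiv.Perm α) {M : Equiv.Perm α}
    (hM : M ∈ perfectMatchings α) : σ * M * σ⁻¹ ∈ perfectMatchings α := by
  obtain ⟨hinv, hfix⟩ := mem_perfectMatchings.1 hM
  refine mem_perfectMatchings.2 ⟨fun x ↦ by simp [hinv _], fun x hx ↦ hfix (σ⁻¹ x) ?_⟩
  rwa [Equiv.Perm.mul_apply, Equiv.Perm.mul_apply, ← Equiv.Perm.eq_inv_iff_eq] at hx

lemma exists_transversal {M : Equiv.Perm α} (hM : M ∈ perfectMatchings α) :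
    ∃ T : Finset α, ∀ x, M x ∈ T ↔ x ∉ T := by
  obtain ⟨hinv, hfix⟩ := mem_perfectMatchings.1 hM
  let e := Fintype.equivFin α
  refine ⟨({x | e x < e (M x)} : Finset α), fun x ↦ ?_⟩
  have hne : e (M x) ≠ e x := e.injective.ne (hfix x)
  simp [hinv x, hne.le_iff_lt]

lemma exists_partner_mem_sdiff {M : Equiv.Perm α} (hM : M ∈ perfectMatchings α) {A : Finset α}
    {m : ℕ} (hm : 2 * m ≤ #{x ∈ A | M x ∈ A}) :
    ∃ T ∈ A.powersetCard m, ∀ t ∈ T, M t ∈ A \ T := by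
  have hinv := (mem_perfectMatchings.1 hM).1
  obtain ⟨R, hR⟩ := exists_transversal hM
  set T := {x ∈ A | M x ∈ A ∧ x ∈ R}
  have hcover : {x ∈ A | M x ∈ A} ⊆ T ∪ T.image M := by
    intro x hx
    obtain ⟨hxA, hMxA⟩ := mem_filter.1 hx
    by_cases hxR : x ∈ R
    · exact mem_union_left _ (by simp [T, *])
    · exact mem_union_right _ (mem_image.2 ⟨M x, by simp [T, *, hinv x], hinv x⟩)
  have hcard : m ≤ #T := by
    have := (card_le_card hcover).trans (card_union_le _ _)
    have := card_image_le (s := T) (f := M)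
    lia
  obtain ⟨T', hT', rfl⟩ := exists_subset_card_eq hcard
  have hmem : ∀ x ∈ T', x ∈ A ∧ M x ∈ A ∧ x ∈ R := fun x hx ↦ mem_filter.1 (hT' hx)
  refine ⟨T', mem_powersetCard.2 ⟨fun x hx ↦ (hmem x hx).1, rfl⟩, fun x hx ↦ ?_⟩
  exact mem_sdiff.2 ⟨(hmem x hx).2.1, fun h ↦ (hR x).1 (hmem _ h).2.2 (hmem x hx).2.2⟩

/-- The perfect matchings in which the partner of each `t ∈ T` is prescribed to be `f t`. -/
def matchingsExtending (f : α → α) (T : Finset α) : Finset (Equiv.Perm α) :=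
  {M ∈ perfectMatchings α | ∀ t ∈ T, M t = f t}

lemma mem_matchingsExtending {f : α → α} {T : Finset α} {M : Equiv.Perm α} :
    M ∈ matchingsExtending f T ↔ M ∈ perfectMatchings α ∧ ∀ t ∈ T, M t = f t :=
  mem_filter

lemma apply_notMem_of_mem_matchingsExtending_insert {f : α → α} {T : Finset α} {a : α} (ha : a ∉ T)
    (hfa : ∀ t ∈ T, f t ≠ a) {M : Equiv.Perm α} (hM : M ∈ matchingsExtending f (insert a T)) :
    f a ∉ insert a (T ∪ T.image f) := by
  obtain ⟨hM, hMf⟩ := mem_matchingsExtending.1 hM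
  obtain ⟨hinv, hfix⟩ := mem_perfectMatchings.1 hM
  have hMa : M a = f a := hMf a (mem_insert_self a T)
  have hMT : ∀ t ∈ T, M t = f t := fun t ht ↦ hMf t (mem_insert_of_mem ht)
  simp only [mem_insert, mem_union, mem_image, not_or, not_exists, not_and]
  refine ⟨hMa ▸ hfix a, fun hfaT ↦ hfa _ hfaT ?_, fun t ht hta ↦ ha ?_⟩
  · rw [← hMT _ hfaT, ← hMa, hinv a]
  · rwa [← M.injective ((hMT t ht).trans (hta.trans hMa.symm))]

lemma swap_conj_mem_matchingsExtending {f : α → α} {T : Finset α} {a c : α} (ha : a ∉ T)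
    (hfa : ∀ t ∈ T, f t ≠ a) (hc : c ∉ insert a (T ∪ T.image f)) {M : Equiv.Perm α}
    (hM : M ∈ matchingsExtending f (insert a T)) :
    Equiv.swap (f a) c * M * (Equiv.swap (f a) c)⁻¹ ∈
      matchingsExtending (Function.update f a c) (insert a T) := by
  have hswap : ∀ x ∈ insert a (T ∪ T.image f), Equiv.swap (f a) c x = x := fun x hx ↦
    Equiv.swap_apply_of_ne_of_ne
      (ne_of_mem_of_not_mem hx (apply_notMem_of_mem_matchingsExtending_insert ha hfa hM))
      (ne_of_mem_of_not_mem hx hc)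
  obtain ⟨hM, hMf⟩ := mem_matchingsExtending.1 hM
  refine mem_matchingsExtending.2 ⟨conj_mem_perfectMatchings _ hM, fun x hx ↦ ?_⟩
  have hMx : M x = f x := hMf x hx
  obtain rfl | hxT := mem_insert.1 hx
  · simp [hswap x (mem_insert_self x _), hMx]
  · have hxU : x ∈ insert a (T ∪ T.image f) := mem_insert_of_mem (mem_union_left _ hxT)
    have hfxU : f x ∈ insert a (T ∪ T.image f) :=
      mem_insert_of_mem (mem_union_right _ (mem_image_of_mem f hxT))
    simp [hswap x hxU, hMx, hswap (f x) hfxU, ne_of_mem_of_not_mem hxT ha]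

-- A switching argument: `a` can be re-paired with each point `c` not involved so far, and `c` is
-- recovered as the new partner of `a`.
lemma card_matchingsExtending_insert_mul_le {f : α → α} {T : Finset α} {a : α} (ha : a ∉ T)
    (hfa : ∀ t ∈ T, f t ≠ a) :
    #(matchingsExtending f (insert a T)) * (Fintype.card α - 2 * (#T + 1))
      ≤ #(matchingsExtending f T) := by
  have hfree : Fintype.card α - 2 * (#T + 1) ≤ #(insert a (T ∪ T.image f))ᶜ := by
    have := card_insert_le a (T ∪ T.image f)
    have := card_union_le T (T.image f)
    have := card_image_le (s := T) (f := f)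
    rw [card_compl]
    lia
  refine (Nat.mul_le_mul_left _ hfree).trans ?_
  rw [← card_product]
  let switch (p : Equiv.Perm α × α) : Equiv.Perm α :=
    Equiv.swap (f a) p.2 * p.1 * (Equiv.swap (f a) p.2)⁻¹
  have hswitch : ∀ p ∈ matchingsExtending f (insert a T) ×ˢ (insert a (T ∪ T.image f))ᶜ,
      switch p ∈ matchingsExtending (Function.update f a p.2) (insert a T) := fun p hp ↦
    swap_conj_mem_matchingsExtending ha hfa (mem_compl.1 (mem_product.1 hp).2) (mem_product.1 hp).1
  refine card_le_card_of_injOn switch (fun p hp ↦ ?_) fun p hp p' hp' heq ↦ ?_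
  · obtain ⟨hperfect, hpf⟩ := mem_matchingsExtending.1 (hswitch p hp)
    refine mem_matchingsExtending.2 ⟨hperfect, fun t ht ↦ ?_⟩
    rw [hpf t (mem_insert_of_mem ht), Function.update_of_ne (ne_of_mem_of_not_mem ht ha)]
  · have hpartner : ∀ p ∈ matchingsExtending f (insert a T) ×ˢ (insert a (T ∪ T.image f))ᶜ,
        switch p a = p.2 := fun p hp ↦ by
      simpa using (mem_matchingsExtending.1 (hswitch p hp)).2 a (mem_insert_self a T)
    have hsnd : p.2 = p'.2 := by rw [← hpartner p hp, ← hpartner p' hp', heq]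
    refine Prod.ext ?_ hsnd
    simpa [switch, hsnd] using heq

lemma card_matchingsExtending_mul_pow_le {f : α → α} {T : Finset α} (hf : ∀ t ∈ T, f t ∉ T) :
    #(matchingsExtending f T) * (Fintype.card α - 2 * #T) ^ #T ≤ #(perfectMatchings α) := by
  induction T using Finset.induction_on with
  | empty => simp [matchingsExtending]
  | insert a T ha ih =>
    have hfa : ∀ t ∈ T, f t ≠ a := fun t ht h ↦ hf t (mem_insert_of_mem ht) (by simp [h])
    have hfT : ∀ t ∈ T, f t ∉ T := fun t ht h ↦ hf t (mem_insert_of_mem ht) (mem_insert_of_mem h)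
    rw [card_insert_of_notMem ha, pow_succ', ← mul_assoc]
    refine (Nat.mul_le_mul (card_matchingsExtending_insert_mul_le ha hfa) ?_).trans (ih hfT)
    gcongr
    lia

lemma card_forall_partner_mem_mul_pow_le {B T : Finset α} (hBT : Disjoint B T) :
    #{M ∈ perfectMatchings α | ∀ t ∈ T, M t ∈ B} * (Fintype.card α - 2 * #T) ^ #T
      ≤ #B ^ #T * #(perfectMatchings α) := by
  have hrestrict : ∀ M ∈ ({M ∈ perfectMatchings α | ∀ t ∈ T, M t ∈ B} : Finset _),
      (fun t : T ↦ M t) ∈ Fintype.piFinset fun _ : T ↦ B := fun M hM ↦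
    Fintype.mem_piFinset.2 fun t ↦ (mem_filter.1 hM).2 t t.2
  have hcard : #(Fintype.piFinset fun _ : T ↦ B) = #B ^ #T := by simp
  rw [card_eq_sum_card_fiberwise hrestrict, sum_mul, ← hcard, ← smul_eq_mul #(Fintype.piFinset _)]
  refine sum_le_card_nsmul _ _ _ fun g hg ↦ ?_
  let f : α → α := fun x ↦ if hx : x ∈ T then g ⟨x, hx⟩ else x
  have hfT : ∀ t ∈ T, f t ∉ T := fun t ht ↦ by
    simpa [f, ht] using disjoint_left.1 hBT (Fintype.mem_piFinset.1 hg ⟨t, ht⟩)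
  refine (Nat.mul_le_mul_right _ (card_le_card fun M hM ↦ ?_)).trans
    (card_matchingsExtending_mul_pow_le hfT)
  obtain ⟨⟨hM, -⟩, hMg⟩ := by simpa only [mem_filter] using hM
  exact mem_matchingsExtending.2 ⟨hM, fun t ht ↦ by simp [f, ht, ← hMg]⟩

lemma card_le_card_partner_mem_mul_pow_le (A : Finset α) (m : ℕ) :
    #{M ∈ perfectMatchings α | 2 * m ≤ #{x ∈ A | M x ∈ A}} * (Fintype.card α - 2 * m) ^ m
      ≤ (#A).choose m * #A ^ m * #(perfectMatchings α) := by
  have hcover : ({M ∈ perfectMatchings α | 2 * m ≤ #{x ∈ A | M x ∈ A}} : Finset _) ⊆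
      (A.powersetCard m).biUnion fun T ↦ {M ∈ perfectMatchings α | ∀ t ∈ T, M t ∈ A \ T} := by
    intro M hM
    obtain ⟨hM, hm⟩ := mem_filter.1 hM
    obtain ⟨T, hT, hMT⟩ := exists_partner_mem_sdiff hM hm
    exact mem_biUnion.2 ⟨T, hT, mem_filter.2 ⟨hM, hMT⟩⟩
  refine (Nat.mul_le_mul_right _ ((card_le_card hcover).trans card_biUnion_le)).trans ?_
  rw [sum_mul, mul_assoc, ← card_powersetCard, ← smul_eq_mul #(A.powersetCard m)]
  refine sum_le_card_nsmul _ _ _ fun T hT ↦ ?_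
  obtain ⟨-, rfl⟩ := mem_powersetCard.1 hT
  refine (card_forall_partner_mem_mul_pow_le sdiff_disjoint).trans ?_
  gcongr
  exact sdiff_subset

end PerfectMatching

section Estimates

open Finset Real

lemma choose_le_exp_one_mul_div_pow (n r : ℕ) : (n.choose r : ℝ) ≤ (exp 1 * n / r) ^ r := by
  obtain rfl | hr := r.eq_zero_or_pos
  · simp
  have hexp : (r : ℝ) ^ r / r.factorial ≤ exp 1 ^ r := by
    rw [← exp_nat_mul, mul_one]
    exact pow_div_factorial_le_exp _ r.cast_nonneg r
  calc (n.choose r : ℝ) ≤ (n : ℝ) ^ r / r.factorial := Nat.choose_le_pow_div r n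
    _ = (n / r : ℝ) ^ r * ((r : ℝ) ^ r / r.factorial) := by rw [div_pow]; field_simp
    _ ≤ (n / r : ℝ) ^ r * exp 1 ^ r := by gcongr
    _ = (exp 1 * n / r) ^ r := by rw [← mul_pow, mul_comm, mul_div_assoc]

lemma sum_finset_le_sum_range_of_choose_mul_le {V : Type*} [Fintype V] {g : Finset V → ℝ}
    {F : ℕ → ℝ} (h : ∀ S, (Fintype.card V).choose #S * g S ≤ F #S) :
    ∑ S, g S ≤ ∑ s ∈ range (Fintype.card V + 1), F s := by
  have hchoose : ∀ s ≤ Fintype.card V, (0 : ℝ) < (Fintype.card V).choose s := fun s hs ↦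
    mod_cast Nat.choose_pos hs
  calc ∑ S, g S ≤ ∑ S : Finset V, F #S / (Fintype.card V).choose #S :=
        sum_le_sum fun S _ ↦ (le_div_iff₀' (hchoose _ (card_le_univ S))).2 (h S)
    _ = ∑ s ∈ range (Fintype.card V + 1), F s := by
        rw [← powerset_univ,
          sum_powerset_apply_card fun s ↦ F s / ((Fintype.card V).choose s : ℝ), card_univ]
        refine sum_congr rfl fun s hs ↦ ?_
        rw [nsmul_eq_mul, mul_div_cancel₀ _ (hchoose s (mem_range_succ_iff.1 hs)).ne']

lemma summable_rpow_mul_geometric (a : ℝ) {q : ℝ} (hq0 : 0 ≤ q) (hq1 : q < 1) :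
    Summable fun s : ℕ ↦ (s : ℝ) ^ a * q ^ s := by
  have hq : ‖q‖ < 1 := by rwa [norm_of_nonneg hq0]
  refine .of_norm_bounded_eventually_nat (summable_pow_mul_geometric_of_norm_lt_one ⌈a⌉₊ hq) ?_
  filter_upwards [Filter.eventually_ge_atTop 1] with s hs
  rw [norm_of_nonneg (by positivity), ← rpow_natCast (s : ℝ) ⌈a⌉₊]
  gcongr
  · exact mod_cast hs
  · exact Nat.le_ceil a

lemma natCast_rpow_le_natCast_rpow (n : ℕ) {a b : ℝ} (ha : a ≠ 0) (hab : a ≤ b) :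
    (n : ℝ) ^ a ≤ (n : ℝ) ^ b := by
  obtain rfl | hn := n.eq_zero_or_pos
  · rw [Nat.cast_zero, zero_rpow ha]
    exact zero_rpow_nonneg b
  · exact rpow_le_rpow_of_exponent_le (mod_cast hn) hab

end Estimates

section ConfigurationModel

open Finset Real

variable {n d : ℕ}

lemma pairings_eq_perfectMatchings (n d : ℕ) : pairings n d = perfectMatchings (Fin n × Fin d) := by
  ext M
  simp [pairings, mem_perfectMatchings, Function.Involutive]

lemma pairings_nonempty (h : Even (n * d)) : (pairings n d).Nonempty := by
  rw [pairings_eq_perfectMatchings]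
  exact perfectMatchings_nonempty (by simpa using h)

variable {P Q : Equiv.Perm (Fin n × Fin d) → Prop}

lemma configProb_mono (h : ∀ M, P M → Q M) : configProb n d P ≤ configProb n d Q := by
  unfold configProb
  gcongr with M
  exact h M

lemma configProb_nonneg (P : Equiv.Perm (Fin n × Fin d) → Prop) : 0 ≤ configProb n d P :=
  div_nonneg (Nat.cast_nonneg _) (Nat.cast_nonneg _)

lemma configProb_le_one (P : Equiv.Perm (Fin n × Fin d) → Prop) : configProb n d P ≤ 1 :=
  div_le_one_of_le₀ (mod_cast card_filter_le _ _) (Nat.cast_nonneg _)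

lemma configProb_eq_zero (h : ∀ M, ¬ P M) : configProb n d P = 0 := by
  simp [configProb, h]

lemma configProb_eq_one_sub (h : Even (n * d)) (P : Equiv.Perm (Fin n × Fin d) → Prop) :
    configProb n d P = 1 - configProb n d fun M ↦ ¬ P M := by
  have hpos : (0 : ℝ) < #(pairings n d) := mod_cast (pairings_nonempty h).card_pos
  rw [eq_sub_iff_add_eq, configProb, configProb, ← add_div, div_eq_one_iff_eq hpos.ne']
  rw [← Nat.cast_add, Nat.cast_inj]
  convert card_filter_add_card_filter_not (s := pairings n d) P

lemma configProb_exists_le_sum {ι : Type*} [Fintype ι]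
    (P : ι → Equiv.Perm (Fin n × Fin d) → Prop) :
    (configProb n d fun M ↦ ∃ i, P i M) ≤ ∑ i, configProb n d (P i) := by
  simp only [configProb]
  rw [← sum_div]
  gcongr
  rw [← Nat.cast_sum, Nat.cast_le]
  refine (card_le_card fun M hM ↦ ?_).trans card_biUnion_le
  simpa using hM

lemma two_mul_edgesWithin_le (M : Equiv.Perm (Fin n × Fin d)) (S : Finset (Fin n)) :
    2 * edgesWithin M S ≤ #S * d := by
  have hsub : ({h : Fin n × Fin d | h.1 ∈ S ∧ (M h).1 ∈ S} : Finset _) ⊆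
      S ×ˢ (univ : Finset (Fin d)) := by
    intro h hh
    simpa using (mem_filter.1 hh).2.1
  have hcard := card_le_card hsub
  rw [card_product, card_univ, Fintype.card_fin] at hcard
  unfold edgesWithin
  lia

lemma edgesWithin_le_mul_card {k : ℝ} (hk : (d : ℝ) ≤ 2 * k) (M : Equiv.Perm (Fin n × Fin d))
    (S : Finset (Fin n)) : (edgesWithin M S : ℝ) ≤ k * #S := by
  have hedges : 2 * (edgesWithin M S : ℝ) ≤ #S * d := mod_cast two_mul_edgesWithin_le M S
  have : (#S : ℝ) * d ≤ #S * (2 * k) := by gcongr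
  linarith

lemma configProb_le_edgesWithin_mul_pow_le (S : Finset (Fin n)) (m : ℕ) :
    configProb n d (fun M ↦ m ≤ edgesWithin M S) * ((n * d - 2 * m : ℕ) : ℝ) ^ m
      ≤ (#S * d).choose m * (#S * d : ℝ) ^ m := by
  set A : Finset (Fin n × Fin d) := S ×ˢ univ
  have hA : #A = #S * d := by simp [A]
  have hcount := card_le_card_partner_mem_mul_pow_le A m
  rw [hA, Fintype.card_prod, Fintype.card_fin, Fintype.card_fin, ← pairings_eq_perfectMatchings]
    at hcount
  rw [configProb, div_mul_eq_mul_div]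
  refine div_le_of_le_mul₀ (by positivity) (by positivity) ?_
  norm_cast
  refine (Nat.mul_le_mul_right _ (card_le_card fun M hM ↦ ?_)).trans hcount
  obtain ⟨hM, hm⟩ : M ∈ pairings n d ∧ m ≤ edgesWithin M S := by simpa using hM
  have htwo : 2 * m ≤ #{h : Fin n × Fin d | h.1 ∈ S ∧ (M h).1 ∈ S} := by
    rw [edgesWithin] at hm
    lia
  exact mem_filter.2 ⟨hM, htwo.trans (card_le_card fun h hh ↦ by simpa [A] using hh)⟩

lemma configProb_le_edgesWithin_le_pow {S : Finset (Fin n)} (hS : (#S : ℝ) ≤ (1 - 2 / exp 1) * n)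
    (m : ℕ) :
    configProb n d (fun M ↦ m ≤ edgesWithin M S) ≤ (exp 2 * #S ^ 2 * d / (2 * m * n)) ^ m := by
  by_cases hm : 2 * m ≤ #S * d
  swap
  · rw [configProb_eq_zero fun M hM ↦ hm (by linarith [two_mul_edgesWithin_le M S])]
    positivity
  obtain rfl | hm0 := m.eq_zero_or_pos
  · simpa using configProb_le_one _
  have hSd : 0 < #S * d := by lia
  have hd : (0 : ℝ) < d := mod_cast Nat.pos_of_mul_pos_left hSd
  have hn : (0 : ℝ) < n := by
    have : #S ≤ n := by simpa using card_le_univ S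
    exact mod_cast (Nat.pos_of_mul_pos_right hSd).trans_le this
  have hfree : 2 / exp 1 * n * d ≤ ((n * d - 2 * m : ℕ) : ℝ) := by
    have hm' : (2 * m : ℝ) ≤ #S * d := mod_cast hm
    have hcast : (n * d : ℝ) ≤ ((n * d - 2 * m : ℕ) : ℝ) + 2 * m := mod_cast le_tsub_add
    nlinarith
  have hpos : 0 < 2 / exp 1 * n * d := by positivity
  refine le_of_mul_le_mul_right ?_ (pow_pos (hpos.trans_le hfree) m)
  calc configProb n d (fun M ↦ m ≤ edgesWithin M S) * ((n * d - 2 * m : ℕ) : ℝ) ^ m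
      ≤ (#S * d).choose m * (#S * d : ℝ) ^ m := configProb_le_edgesWithin_mul_pow_le S m
    _ ≤ (exp 1 * (#S * d : ℕ) / m) ^ m * (#S * d : ℝ) ^ m := by
        gcongr
        exact choose_le_exp_one_mul_div_pow _ m
    _ = (exp 2 * #S ^ 2 * d / (2 * m * n)) ^ m * (2 / exp 1 * n * d) ^ m := by
        have hexp : exp 2 = exp 1 * exp 1 := by rw [← exp_add]; norm_num
        rw [← mul_pow, ← mul_pow, hexp]
        congr 1
        push_cast
        field_simp
    _ ≤ _ := by gcongr

end ConfigurationModel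

section SmallSubsets

open Finset Real Filter Topology

/-- Every vertex set of size at most `c * n` induces a `k`-sparse subgraph of the multigraph of the
pairing `M`. -/
def SmallSubsetsSparse {n d : ℕ} (k c : ℝ) (M : Equiv.Perm (Fin n × Fin d)) : Prop :=
  ∀ S : Finset (Fin n), (#S : ℝ) ≤ c * n → (edgesWithin M S : ℝ) ≤ k * #S

/-- The constant `C_{k,d} = e^{-4} (2k/d)^{1 + 1/(k-1)}` of the theorem. -/
def smallSubsetRatio (d : ℕ) (k : ℝ) : ℝ := exp (-4) * (2 * k / d) ^ (1 + 1 / (k - 1))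

variable {n d : ℕ} {k : ℝ}

lemma smallSubsetRatio_pos (hk : 0 < k) (hkd : 2 * k ≤ d) : 0 < smallSubsetRatio d k := by
  have hd : (0 : ℝ) < d := by linarith
  unfold smallSubsetRatio
  positivity

lemma smallSubsetRatio_le (hk : 1 < k) (hkd : 2 * k ≤ d) :
    smallSubsetRatio d k ≤ exp (-4) * (2 * k / d) := by
  have hd : (0 : ℝ) < d := by linarith
  have hu : 0 < 2 * k / d := by positivity
  have hk' : 0 < 1 / (k - 1) := one_div_pos.2 (sub_pos.2 hk)
  unfold smallSubsetRatio
  gcongr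
  exact rpow_le_self_of_le_one hu.le ((div_le_one hd).2 hkd) (by linarith)

lemma exp_neg_four_le : exp (-4) ≤ 1 - 2 / exp 1 := by
  have he : 5 / 2 < exp 1 := by linarith [exp_one_gt_d9]
  have htwo : 2 / exp 1 ≤ 4 / 5 := by
    rw [div_le_iff₀ (exp_pos 1)]
    linarith
  have hfour : exp (-4) ≤ 1 / 5 := by
    rw [exp_neg, inv_eq_one_div]
    gcongr
    linarith [add_one_le_exp (4 : ℝ)]
  linarith

-- `C_{k,d}` is chosen so that `C_{k,d}^(k - 1)` absorbs the factor `(2 k / d)^k`.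
lemma exp_one_div_mul_rpow_eq (hk : 1 < k) (hkd : 2 * k ≤ d) {x : ℝ} (hx : 0 < x) :
    exp 1 / x * (exp 2 * x / (2 * k / d)) ^ k
      = exp (5 - 2 * k) * (x / smallSubsetRatio d k) ^ (k - 1) := by
  have hd : (0 : ℝ) < d := by linarith
  have hu : 0 < 2 * k / d := by positivity
  have hk' : k - 1 ≠ 0 := (sub_pos.2 hk).ne'
  have hratio : smallSubsetRatio d k ^ (k - 1) = exp (4 - 4 * k) * (2 * k / d) ^ k := by
    have hexponent : (1 + 1 / (k - 1)) * (k - 1) = k := by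
      field_simp
      ring
    rw [smallSubsetRatio, mul_rpow (exp_pos _).le (by positivity), ← rpow_mul hu.le, hexponent,
      ← exp_mul]
    ring_nf
  have hexp : exp 1 * exp (2 * k) * exp (4 - 4 * k) = exp (5 - 2 * k) := by
    rw [← exp_add, ← exp_add]
    ring_nf
  rw [div_rpow (by positivity) hu.le, mul_rpow (exp_pos 2).le hx.le, ← exp_mul,
    div_rpow hx.le (smallSubsetRatio_pos (by linarith) hkd).le, hratio, ← hexp,
    rpow_sub hx, rpow_one]
  field_simp

lemma configProb_lt_edgesWithin_le (hk : 1 < k) (hkd : 2 * k ≤ d) {S : Finset (Fin n)}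
    (hS : (#S : ℝ) ≤ smallSubsetRatio d k * n) :
    configProb n d (fun M ↦ k * #S < edgesWithin M S)
      ≤ ((exp 2 * (#S / n) / (2 * k / d)) ^ k) ^ #S := by
  obtain rfl | hne := S.eq_empty_or_nonempty
  · simpa using configProb_le_one _
  have hk0 : 0 < k := by linarith
  have hd : (0 : ℝ) < d := by linarith
  have hs : (0 : ℝ) < #S := mod_cast hne.card_pos
  have hratio := smallSubsetRatio_le hk hkd
  have hn : (0 : ℝ) < n := pos_of_mul_pos_right (hs.trans_le hS) (smallSubsetRatio_pos hk0 hkd).le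
  have hx : #S / n ≤ exp (-4) * (2 * k / d) := ((div_le_iff₀ hn).2 hS).trans hratio
  have hdense : (#S : ℝ) ≤ (1 - 2 / exp 1) * n := by
    refine (div_le_iff₀ hn).1 (hx.trans (le_trans ?_ exp_neg_four_le))
    exact mul_le_of_le_one_right (exp_pos _).le ((div_le_one hd).2 hkd)
  have hbase : exp 2 * (#S / n) / (2 * k / d) ≤ 1 := by
    rw [div_le_one (by positivity)]
    calc exp 2 * (#S / n) ≤ exp 2 * (exp (-4) * (2 * k / d)) := by gcongr
      _ = exp (-2) * (2 * k / d) := by rw [← mul_assoc, ← exp_add]; norm_num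
      _ ≤ 2 * k / d := mul_le_of_le_one_left (by positivity) (exp_le_one_iff.2 (by norm_num))
  set m := ⌈k * #S⌉₊
  have hm : k * #S ≤ m := Nat.le_ceil _
  calc configProb n d (fun M ↦ k * #S < edgesWithin M S)
      ≤ configProb n d fun M ↦ m ≤ edgesWithin M S :=
        configProb_mono fun M hM ↦ Nat.ceil_le.2 hM.le
    _ ≤ (exp 2 * #S ^ 2 * d / (2 * m * n)) ^ m := configProb_le_edgesWithin_le_pow hdense m
    _ ≤ (exp 2 * #S ^ 2 * d / (2 * (k * #S) * n)) ^ m := by gcongr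
    _ = (exp 2 * (#S / n) / (2 * k / d)) ^ (m : ℝ) := by
        rw [rpow_natCast]
        congr 1
        field_simp
    _ ≤ (exp 2 * (#S / n) / (2 * k / d)) ^ (k * #S) :=
        rpow_le_rpow_of_exponent_ge (by positivity) hbase hm
    _ = _ := rpow_mul_natCast (by positivity) k #S

lemma choose_mul_configProb_lt_edgesWithin_le (hk : 1 < k) (hkd : 2 * k ≤ d) {S : Finset (Fin n)}
    (hS : (#S : ℝ) ≤ smallSubsetRatio d k * n) :
    n.choose #S * configProb n d (fun M ↦ k * #S < edgesWithin M S)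
      ≤ (exp (5 - 2 * k) * (#S / n / smallSubsetRatio d k) ^ (k - 1)) ^ #S := by
  obtain rfl | hne := S.eq_empty_or_nonempty
  · simpa using configProb_le_one _
  have hs : (0 : ℝ) < #S := mod_cast hne.card_pos
  have hn : (0 : ℝ) < n := pos_of_mul_pos_right (hs.trans_le hS)
    (smallSubsetRatio_pos (by linarith) hkd).le
  rw [← exp_one_div_mul_rpow_eq hk hkd (div_pos hs hn), mul_pow]
  gcongr
  · exact configProb_nonneg _
  · rw [div_div_eq_mul_div]
    exact choose_le_exp_one_mul_div_pow n #S
  · exact configProb_lt_edgesWithin_le hk hkd hS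

lemma choose_mul_configProb_le_rpow_mul_geometric (hk : 1 < k) (hkd : 2 * k ≤ d)
    (S : Finset (Fin n)) :
    n.choose #S * configProb n d
        (fun M ↦ (#S : ℝ) ≤ smallSubsetRatio d k * n ∧ k * #S < edgesWithin M S)
      ≤ (smallSubsetRatio d k * n) ^ (1 - k) * ((#S : ℝ) ^ (k - 1) * exp (5 - 2 * k) ^ #S) := by
  have hratio := smallSubsetRatio_pos (by linarith) hkd
  by_cases hS : S.Nonempty ∧ (#S : ℝ) ≤ smallSubsetRatio d k * n
  swap
  · rw [configProb_eq_zero fun M hM ↦ hS ⟨nonempty_iff_ne_empty.2 ?_, hM.1⟩, mul_zero]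
    · positivity
    · rintro rfl
      simp [edgesWithin] at hM
  obtain ⟨hne, hS⟩ := hS
  have hs : (0 : ℝ) < #S := mod_cast hne.card_pos
  have hn : (0 : ℝ) < n := pos_of_mul_pos_right (hs.trans_le hS) hratio.le
  have hscale : #S / n / smallSubsetRatio d k = #S / (smallSubsetRatio d k * n) := by field_simp
  have hle_one : (#S / (smallSubsetRatio d k * n)) ^ (k - 1) ≤ 1 :=
    rpow_le_one (by positivity) ((div_le_one (by positivity)).2 hS) (by linarith)
  calc _ ≤ n.choose #S * configProb n d fun M ↦ k * #S < edgesWithin M S := by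
        gcongr
        exact configProb_mono fun M hM ↦ hM.2
    _ ≤ (exp (5 - 2 * k) * (#S / (smallSubsetRatio d k * n)) ^ (k - 1)) ^ #S := by
        rw [← hscale]
        exact choose_mul_configProb_lt_edgesWithin_le hk hkd hS
    _ ≤ exp (5 - 2 * k) ^ #S * (#S / (smallSubsetRatio d k * n)) ^ (k - 1) := by
        rw [mul_pow]
        gcongr
        exact pow_le_of_le_one (by positivity) hle_one hne.card_pos.ne'
    _ = _ := by
        rw [div_rpow hs.le (by positivity), ← neg_sub k 1, rpow_neg (by positivity)]
        ring

lemma configProb_not_smallSubsetsSparse_le (hk : 5 / 2 < k) (hkd : 2 * k ≤ d) (n : ℕ) :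
    configProb n d (fun M ↦ ¬ SmallSubsetsSparse k (smallSubsetRatio d k) M)
      ≤ smallSubsetRatio d k ^ (1 - k) * (∑' s : ℕ, (s : ℝ) ^ (k - 1) * exp (5 - 2 * k) ^ s) *
        (n : ℝ) ^ (1 - k) := by
  have hsummable : Summable fun s : ℕ ↦ (s : ℝ) ^ (k - 1) * exp (5 - 2 * k) ^ s :=
    summable_rpow_mul_geometric _ (exp_pos _).le (exp_lt_one_iff.2 (by linarith))
  have hratio := smallSubsetRatio_pos (by linarith) hkd
  calc configProb n d (fun M ↦ ¬ SmallSubsetsSparse k (smallSubsetRatio d k) M)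
      ≤ configProb n d fun M ↦ ∃ S : Finset (Fin n),
          (#S : ℝ) ≤ smallSubsetRatio d k * n ∧ k * #S < edgesWithin M S :=
        configProb_mono fun M hM ↦ by simpa [SmallSubsetsSparse] using hM
    _ ≤ ∑ S : Finset (Fin n), configProb n d fun M ↦
          (#S : ℝ) ≤ smallSubsetRatio d k * n ∧ k * #S < edgesWithin M S :=
        configProb_exists_le_sum _
    _ ≤ ∑ s ∈ range (n + 1), (smallSubsetRatio d k * n) ^ (1 - k) *
          ((s : ℝ) ^ (k - 1) * exp (5 - 2 * k) ^ s) := by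
        have h := choose_mul_configProb_le_rpow_mul_geometric (n := n) (by linarith) hkd
        simpa using sum_finset_le_sum_range_of_choose_mul_le
          (V := Fin n) (by simpa using h)
    _ ≤ (smallSubsetRatio d k * n) ^ (1 - k) *
          ∑' s : ℕ, (s : ℝ) ^ (k - 1) * exp (5 - 2 * k) ^ s := by
        rw [← mul_sum]
        gcongr
        exact hsummable.sum_le_tsum _ fun s _ ↦ by positivity
    _ = _ := by
        rw [mul_rpow hratio.le n.cast_nonneg]
        ring

lemma tendsto_configProb_one_of_not_le {P : ∀ n, Equiv.Perm (Fin n × Fin d) → Prop} {C : ℝ}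
    (hk : 1 < k) (hP : ∀ n, configProb n d (fun M ↦ ¬ P n M) ≤ C * (n : ℝ) ^ (1 - k)) :
    Tendsto (fun n ↦ configProb n d (P n)) (atTop ⊓ 𝓟 {n : ℕ | Even (n * d)}) (𝓝 1) := by
  have hpow : Tendsto (fun n : ℕ ↦ (n : ℝ) ^ (1 - k)) atTop (𝓝 0) := by
    simpa [Function.comp_def] using
      (tendsto_rpow_neg_atTop (sub_pos.2 hk)).comp tendsto_natCast_atTop_atTop
  have hlower : Tendsto (fun n : ℕ ↦ 1 - C * (n : ℝ) ^ (1 - k)) atTop (𝓝 1) := by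
    simpa using (hpow.const_mul C).const_sub 1
  refine tendsto_of_tendsto_of_tendsto_of_le_of_le' (hlower.mono_left inf_le_left)
    tendsto_const_nhds ?_ (.of_forall fun n ↦ configProb_le_one _)
  filter_upwards [mem_inf_of_right (mem_principal_self _)] with n hn
  rw [configProb_eq_one_sub hn]
  linarith [hP n]

lemma exists_configProb_not_smallSubsetsSparse_le (d : ℕ) (hk : 5 / 2 < k) :
    ∃ C : ℝ, 0 < C ∧ ∀ n : ℕ,
      configProb n d (fun M ↦ ¬ SmallSubsetsSparse k (smallSubsetRatio d k) M)
        ≤ C * (n : ℝ) ^ (1 - k) := by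
  obtain hkd | hkd := le_or_gt (2 * k) d
  · exact ⟨max _ 1, lt_max_of_lt_right one_pos, fun n ↦
      (configProb_not_smallSubsetsSparse_le hk hkd n).trans
        (mul_le_mul_of_nonneg_right (le_max_left _ _) (by positivity))⟩
  · refine ⟨1, one_pos, fun n ↦ ?_⟩
    rw [configProb_eq_zero fun M hM ↦ hM fun S _ ↦ edgesWithin_le_mul_card hkd.le M S]
    positivity

theorem small_subsets_ksparse_random_regular_general (d : ℕ) (k : ℝ) (hk : 5 / 2 < k) :
    Tendsto (fun n ↦ configProb n d (SmallSubsetsSparse k (smallSubsetRatio d k)))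
      (atTop ⊓ 𝓟 {n : ℕ | Even (n * d)}) (𝓝 1) ∧
    ∃ C : ℝ, 0 < C ∧ ∀ n : ℕ,
      configProb n d (fun M ↦ ¬ SmallSubsetsSparse k (smallSubsetRatio d k) M)
        ≤ C * (n : ℝ) ^ (1 - k) := by
  obtain ⟨C, hC, hbound⟩ := exists_configProb_not_smallSubsetsSparse_le d hk
  exact ⟨tendsto_configProb_one_of_not_le (by linarith) hbound, C, hC, hbound⟩

end SmallSubsets

/-- Lemma: for `d ≥ 12` and `3.5 < k ≤ (1 - 1/√2) d`, with `C_{k,d} = e^{-4} (2k/d)^{1+1/(k-1)}`,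
with high probability every vertex subset of the configuration-model random `d`-regular
multigraph of size at most `C_{k,d} n` is `k`-sparse (induces at most `k|S|` edges); moreover
the probability of failure is `O(n^{3.5-k})`. -/
theorem small_subsets_ksparse_random_regular (d : ℕ) (k : ℝ) (hd : 12 ≤ d)
    (hk1 : 3.5 < k) (hk2 : k ≤ (1 - 1 / Real.sqrt 2) * d) :
    (Filter.Tendsto
      (fun n : ℕ => configProb n d (fun M =>
        ∀ S : Finset (Fin n),
          (S.card : ℝ) ≤ Real.exp (-4) * (2 * k / d) ^ (1 + 1 / (k - 1)) * n →
          (edgesWithin M S : ℝ) ≤ k * S.card))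
      (Filter.atTop ⊓ Filter.principal {n : ℕ | Even (n * d)}) (nhds 1)) ∧
    ∃ C : ℝ, 0 < C ∧ ∀ n : ℕ,
      configProb n d (fun M => ¬ (∀ S : Finset (Fin n),
          (S.card : ℝ) ≤ Real.exp (-4) * (2 * k / d) ^ (1 + 1 / (k - 1)) * n →
          (edgesWithin M S : ℝ) ≤ k * S.card))
        ≤ C * (n : ℝ) ^ ((3.5 : ℝ) - k) := by
  obtain ⟨hlim, C, hC, hbound⟩ := small_subsets_ksparse_random_regular_general d k (by linarith)
  exact ⟨hlim, C, hC, fun n ↦ (hbound n).trans <| mul_le_mul_of_nonneg_left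
    (natCast_rpow_le_natCast_rpow n (by linarith) (by linarith)) hC.le⟩

end
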